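/- Let L₀ be a τ-stable lattice with L₀ = L₀^∨ and L₂ a τ-stable lattice with L₂ = pL₂^∨ and L₂ ⊆ L₀. Then L₂ ⊂² L₀, the quotient L₀/L₂ is a 2-dimensional 𝔽-vector space, every W-submodule D with L₂ ⊆ D ⊆ L₀ and length_W(D/L₂) = 1 belongs to ℳ(𝔽), and D ↦ D/L₂ is a bijection from the set {D ∈ ℳ(𝔽) : L₂ ⊆ D ⊆ L₀} onto the set of 1-dimensional 𝔽-subspaces of L₀/L₂. -/

import Mathlib

open Pointwise

noncomputable section

variable (p : ℕ) [Fact p.Prime] (𝔽 : Type) [Field 𝔽] [IsAlgClosed 𝔽] [CharP 𝔽 p]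

/-- The Witt ring `W(𝔽)`. -/
abbrev Wp := WittVector p 𝔽

/-- The fraction field `K` of `W(𝔽)`. -/
abbrev Kp := FractionRing (Wp p 𝔽)

/-- `N₀ = K⁴`. -/
abbrev N0 := Fin 4 → Kp p 𝔽

/-- The symplectic form on `N₀`. -/
def omegaForm (x y : N0 p 𝔽) : Kp p 𝔽 :=
  x 0 * y 3 - x 3 * y 0 + x 1 * y 2 - x 2 * y 1

/-- The dual lattice of a `W`-submodule of `N₀`. -/
def dualL (D : Submodule (Wp p 𝔽) (N0 p 𝔽)) : Submodule (Wp p 𝔽) (N0 p 𝔽) where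
  carrier := {x | ∀ d ∈ D, omegaForm p 𝔽 x d ∈ (algebraMap (Wp p 𝔽) (Kp p 𝔽)).range}
  zero_mem' := by
    intro d hd
    have : omegaForm p 𝔽 0 d = 0 := by simp [omegaForm]
    rw [this]; exact zero_mem _
  add_mem' := by
    intro x y hx hy d hd
    have : omegaForm p 𝔽 (x + y) d = omegaForm p 𝔽 x d + omegaForm p 𝔽 y d := by
      simp [omegaForm]; ring
    rw [this]; exact add_mem (hx d hd) (hy d hd)
  smul_mem' := by
    intro c x hx d hd
    have : omegaForm p 𝔽 (c • x) d
        = algebraMap (Wp p 𝔽) (Kp p 𝔽) c * omegaForm p 𝔽 x d := by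
      simp [omegaForm, Algebra.smul_def]; ring
    rw [this]; exact mul_mem ⟨c, rfl⟩ (hx d hd)

variable (σ : Kp p 𝔽 ≃+* Kp p 𝔽)

/-- The semilinear map `τ` on `N₀`, applying `σ` to each coordinate. -/
def tauFun (x : N0 p 𝔽) : N0 p 𝔽 := fun i => σ (x i)

/-- The lattice `τD` generated by the image of `D` under `τ`. -/
def tauL (D : Submodule (Wp p 𝔽) (N0 p 𝔽)) : Submodule (Wp p 𝔽) (N0 p 𝔽) :=
  Submodule.span (Wp p 𝔽) (tauFun p 𝔽 σ '' D)

/-- `D` is a lattice in `N₀`: finitely generated over `W` and spanning `N₀` over `K`. -/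
def IsLattice (D : Submodule (Wp p 𝔽) (N0 p 𝔽)) : Prop :=
  D.FG ∧ Submodule.span (Kp p 𝔽) (D : Set (N0 p 𝔽)) = ⊤

/-- The length of the `W`-module `B / A` (as the Krull dimension of its submodule
lattice). -/
def relLength (A B : Submodule (Wp p 𝔽) (N0 p 𝔽)) : WithBot ℕ∞ :=
  Order.krullDim (Submodule (Wp p 𝔽) (B ⧸ (A.comap B.subtype)))

/-- `A ⊂ᵈ B` : `A ⊆ B` with colength `d`. -/
def SubD (d : ℕ) (A B : Submodule (Wp p 𝔽) (N0 p 𝔽)) : Prop :=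
  A ≤ B ∧ relLength p 𝔽 A B = (d : WithBot ℕ∞)

/-- Membership in `ℳ(𝔽)`. -/
def memM (D : Submodule (Wp p 𝔽) (N0 p 𝔽)) : Prop :=
  IsLattice p 𝔽 D ∧
  SubD p 𝔽 2 ((p : Wp p 𝔽) • dualL p 𝔽 D) D ∧
  SubD p 𝔽 2 D (dualL p 𝔽 D) ∧
  SubD p 𝔽 2 ((p : Wp p 𝔽) • dualL p 𝔽 D) (tauL p 𝔽 σ D) ∧
  SubD p 𝔽 2 (tauL p 𝔽 σ D) (dualL p 𝔽 D) ∧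
  relLength p 𝔽 D (D ⊔ tauL p 𝔽 σ D) ≤ 1

/-- `σ` is the automorphism of `K` induced by the Witt-vector Frobenius. -/
def IsWittFrobenius : Prop :=
  ∀ w : Wp p 𝔽, σ (algebraMap (Wp p 𝔽) (Kp p 𝔽) w)
    = algebraMap (Wp p 𝔽) (Kp p 𝔽) (WittVector.frobeniusEquiv p 𝔽 w)


/-!
Two facts drive the argument. Over a principal ideal domain with a prime `ϖ`, duality is an
inclusion-reversing involution on lattices, hence preserves the length of subquotients; and
`L/ϖL` has length equal to the rank of `L`.

In the chain `ϖL₀ ⊆ L₂ ⊆ L₀` the lower step is the dual of the upper one scaled by `ϖ`, because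
`L₀^∨ = L₀` and `ϖL₂^∨ = L₂`. The two steps therefore have the same length, half of the rank.
If `L₂ ⊆ D ⊆ L₀`, duality likewise reflects the step `D ⊆ L₀` into `L₀ ⊆ D^∨` and the step
`L₂ ⊆ D` into `ϖD^∨ ⊆ L₂`. So `D` and `D^∨` are `2 · length(L₀/D)` apart, `ϖD^∨` and `D` are
`2 · length(D/L₂)` apart, and the length of `D^∨/D` determines that of `D/L₂`. All this applies to
`τD` as well, which lies between `L₂` and `L₀` in the same position as `D`; and `(D + τD)/D` is at
most as long as `L₀/D`.
-/

section Colength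

variable {R M N : Type*} [Ring R] [AddCommGroup M] [Module R M] [AddCommGroup N] [Module R N]

/-- The length of the subquotient `B / A`, meant for `A ≤ B`; otherwise that of `B / (A ⊓ B)`. -/
def colength (A B : Submodule R M) : ℕ∞ :=
  Module.length R (B ⧸ A.submoduleOf B)

theorem colength_add_colength {A B C : Submodule R M} (hAB : A ≤ B) (hBC : B ≤ C) :
    colength A B + colength B C = colength A C := by
  have hle : A.submoduleOf C ≤ B.submoduleOf C := Submodule.comap_mono hAB
  have hι : A.submoduleOf B ≤ (A.submoduleOf C).comap (Submodule.inclusion hBC) := fun _ h => h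
  refine (Module.length_eq_add_of_exact (Submodule.mapQ _ _ (Submodule.inclusion hBC) hι)
    (Submodule.factor hle) ?_ (Submodule.factor_surjective hle) (LinearMap.exact_iff.2 ?_)).symm
  · rw [← LinearMap.ker_eq_bot, Submodule.ker_mapQ, ← le_bot_iff, Submodule.map_le_iff_le_comap,
      ← LinearMap.ker, Submodule.ker_mkQ]
    exact fun _ h => h
  · rw [Submodule.range_mapQ, Submodule.range_inclusion, Submodule.factor, Submodule.ker_mapQ]
    rfl

theorem colength_le_colength {A B C : Submodule R M} (hAB : A ≤ B) (hBC : B ≤ C) :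
    colength A B ≤ colength A C :=
  le_self_add.trans_eq (colength_add_colength hAB hBC)

theorem colength_map_of_injective {f : M →ₗ[R] N} (hf : Function.Injective f)
    (A B : Submodule R M) : colength (A.map f) (B.map f) = colength A B := by
  let e := B.equivMapOfInjective f hf
  have he : (A.submoduleOf B).map (e : B →ₗ[R] B.map f) = (A.map f).submoduleOf (B.map f) := by
    ext y
    obtain ⟨x, rfl⟩ := e.surjective y
    exact (e.injective.mem_set_image (s := A.submoduleOf B)).trans
      (hf.mem_set_image (s := A)).symm
  exact (Submodule.Quotient.equiv _ _ e he).length_eq.symm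

/-- Submodules of `B / A` correspond to submodules between `A` and `B`. -/
def submoduleQuotientOrderIsoIcc {A B : Submodule R M} (hAB : A ≤ B) :
    Submodule R (B ⧸ A.submoduleOf B) ≃o Set.Icc A B :=
  (Submodule.comapMkQRelIso (A.submoduleOf B)).trans <|
    Equiv.toOrderIso
      { toFun := fun P => ⟨P.1.map B.subtype,
          ((Submodule.map_comap_subtype B A).trans (inf_eq_right.2 hAB)).ge.trans
            (Submodule.map_mono P.2),
          Submodule.map_subtype_le B P.1⟩
        invFun := fun P => ⟨P.1.submoduleOf B, Submodule.comap_mono P.2.1⟩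
        left_inv := fun P =>
          Subtype.ext (Submodule.comap_map_eq_of_injective B.subtype_injective P.1)
        right_inv := fun P =>
          Subtype.ext ((Submodule.map_comap_subtype B P.1).trans (inf_eq_right.2 P.2.2)) }
      (fun _ _ h => Submodule.map_mono h) (fun _ _ h => Submodule.comap_mono h)

theorem coe_colength {A B : Submodule R M} (hAB : A ≤ B) :
    (colength A B : WithBot ℕ∞) = Order.krullDim (Set.Icc A B) := by
  rw [colength, Module.coe_length,
    Order.krullDim_eq_of_orderIso (submoduleQuotientOrderIsoIcc hAB)]

theorem colength_orderIso (e : Submodule R M ≃o Submodule R N) {A B : Submodule R M}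
    (hAB : A ≤ B) : colength (e A) (e B) = colength A B := by
  apply WithBot.coe_injective
  rw [coe_colength hAB, coe_colength (e.monotone hAB), Order.krullDim_eq_of_orderIso (e.Icc A B)]

theorem colength_of_antitone_involution {f : Submodule R M → Submodule R M} (hf : Antitone f)
    {A B : Submodule R M} (hAB : A ≤ B) (hff : ∀ P ∈ Set.Icc A B, f (f P) = P)
    (hff' : ∀ P ∈ Set.Icc (f B) (f A), f (f P) = P) :
    colength (f B) (f A) = colength A B := by
  let e : Set.Icc (f B) (f A) ≃o (Set.Icc A B)ᵒᵈ := Equiv.toOrderIso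
    { toFun := fun P => OrderDual.toDual
        ⟨f P.1, (hff A ⟨le_rfl, hAB⟩).ge.trans (hf P.2.2),
          (hf P.2.1).trans (hff B ⟨hAB, le_rfl⟩).le⟩
      invFun := fun P => ⟨f P.ofDual.1, hf P.ofDual.2.2, hf P.ofDual.2.1⟩
      left_inv := fun P => Subtype.ext (hff' P.1 P.2)
      right_inv := fun P => congrArg OrderDual.toDual (Subtype.ext (hff P.ofDual.1 P.ofDual.2)) }
    (fun _ _ h => hf h) (fun _ _ h => hf h)
  apply WithBot.coe_injective
  rw [coe_colength hAB, coe_colength (hf hAB), Order.krullDim_eq_of_orderIso e,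
    Order.krullDim_orderDual]

/-- The relation `A ⊂ᵈ B`: `A ≤ B` and `B / A` has length `d`. -/
def HasColength (A B : Submodule R M) (d : ℕ) : Prop :=
  A ≤ B ∧ colength A B = d

namespace HasColength

variable {A B C : Submodule R M} {c d : ℕ}

theorem trans (hAB : HasColength A B c) (hBC : HasColength B C d) : HasColength A C (c + d) :=
  ⟨hAB.1.trans hBC.1, by
    rw [← colength_add_colength hAB.1 hBC.1, hAB.2, hBC.2, Nat.cast_add]⟩

theorem right_of_left (hAC : HasColength A C (c + d)) (hAB : HasColength A B c) (hBC : B ≤ C) :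
    HasColength B C d := by
  refine ⟨hBC, ?_⟩
  have h := colength_add_colength hAB.1 hBC
  rw [hAB.2, hAC.2, Nat.cast_add] at h
  exact WithTop.add_left_cancel (ENat.natCast_ne_top c) h

theorem left_of_right (hAC : HasColength A C (c + d)) (hAB : A ≤ B) (hBC : HasColength B C d) :
    HasColength A B c := by
  refine ⟨hAB, ?_⟩
  have h := colength_add_colength hAB hBC.1
  rw [hBC.2, hAC.2, Nat.cast_add] at h
  exact WithTop.add_right_cancel (ENat.natCast_ne_top d) h

theorem bisect (hAC : HasColength A C (d + d)) (hAB : A ≤ B) (hBC : B ≤ C)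
    (h : colength A B = colength B C) : HasColength A B d ∧ HasColength B C d := by
  have hd : colength A B + colength A B = (d : ℕ∞) + d := by
    rw [← Nat.cast_add, ← hAC.2, ← colength_add_colength hAB hBC, ← h]
  have hAB' : colength A B = d := by
    generalize colength A B = x at hd
    induction x with
    | top => exact absurd hd.symm (ENat.natCast_ne_top (d + d))
    | coe x => norm_cast at hd ⊢; lia
  exact ⟨⟨hAB, hAB'⟩, ⟨hBC, h.symm.trans hAB'⟩⟩

theorem map_orderIso (h : HasColength A B d) (e : Submodule R M ≃o Submodule R N) :
    HasColength (e A) (e B) d :=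
  ⟨e.monotone h.1, (colength_orderIso e h.1).trans h.2⟩

end HasColength

end Colength

section Scaling

variable {R M : Type*} [CommRing R] [AddCommGroup M] [Module R M]

theorem colength_pointwise_smul {r : R} (hr : IsSMulRegular M r) (A B : Submodule R M) :
    colength (r • A) (r • B) = colength A B :=
  colength_map_of_injective (f := DistribSMul.toLinearMap R M r) hr A B

theorem length_quotSMulTop_of_free (r : R) (P : Type*) [AddCommGroup P] [Module R P]
    [Module.Free R P] [Module.Finite R P] :
    Module.length R (QuotSMulTop r P) =
      Module.finrank R P * Module.length R (R ⧸ Ideal.span {r}) := by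
  nontriviality R
  let b := Module.finBasis R P
  let e : QuotSMulTop r P ≃ₗ[R] (Fin (Module.finrank R P) → R ⧸ Ideal.span {r}) :=
    QuotSMulTop.equivQuotTensor r P ≪≫ₗ b.equivFun.lTensor (R ⧸ Ideal.span {r}) ≪≫ₗ
      TensorProduct.piScalarRight R R (R ⧸ Ideal.span {r}) (Fin (Module.finrank R P))
  rw [e.length_eq, Module.length_pi, ENat.card_eq_coe_fintype_card, Fintype.card_fin]

theorem colength_pointwise_smul_self_of_free (r : R) (L : Submodule R M) [Module.Free R L]
    [Module.Finite R L] :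
    colength (r • L) L = Module.finrank R L * Module.length R (R ⧸ Ideal.span {r}) := by
  have hsmul : (r • L).submoduleOf L = r • (⊤ : Submodule R L) := by
    ext x
    simp [Submodule.submoduleOf, Submodule.mem_smul_pointwise_iff_exists, Subtype.ext_iff]
  rw [colength, hsmul]
  exact length_quotSMulTop_of_free r L

end Scaling

section Duality

open LinearMap (BilinForm)

variable {R K V : Type*} [CommRing R] [Field K] [Algebra R K] [AddCommGroup V] [Module K V]

variable (R) in
/-- A bilinear form over `K` is reflexive over `R` if `B x y ∈ R` implies `B y x ∈ R`, so that left
and right dual `R`-modules agree. Symmetric and alternating forms are reflexive over any `R`. -/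
def IsReflOver (B : BilinForm K V) : Prop :=
  ∀ x y, B x y ∈ (1 : Submodule R K) → B y x ∈ (1 : Submodule R K)

theorem isReflOver_of_isAlt {B : BilinForm K V} (hB : B.IsAlt) : IsReflOver R B := by
  intro x y hxy
  rw [← hB.neg_eq]
  exact neg_mem hxy

variable [Module R V] [IsScalarTower R K V] {B : BilinForm K V} {A C D : Submodule R V}

theorem dualSubmodule_antitone (B : BilinForm K V) :
    Antitone (B.dualSubmodule : Submodule R V → Submodule R V) :=
  fun _ _ h _ hx y hy => hx y (h hy)

theorem IsReflOver.dualSubmodule_flip (hB : IsReflOver R B) (D : Submodule R V) :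
    B.flip.dualSubmodule D = B.dualSubmodule D :=
  Submodule.ext fun x => forall₂_congr fun y _ => ⟨hB y x, hB x y⟩

theorem isLattice_of_le_of_le [IsNoetherianRing R] (hA : A.IsLattice K) (hC : C.IsLattice K)
    (hAD : A ≤ D) (hDC : D ≤ C) : D.IsLattice K :=
  ⟨isNoetherian_submodule.1 (isNoetherian_of_fg_of_noetherian C hC.fg) D hDC,
    top_unique (hA.span_eq_top.ge.trans (Submodule.span_mono hAD))⟩

variable [IsDomain R] [IsPrincipalIdealRing R] [IsFractionRing R K]

theorem exists_basis_span_eq_of_isLattice (hD : D.IsLattice K) :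
    ∃ b : Module.Basis (Module.Free.ChooseBasisIndex R D) K V,
      Submodule.span R (Set.range b) = D := by
  let b := Module.Free.chooseBasis R D
  refine ⟨b.extendOfIsLattice K, ?_⟩
  have hrange : Set.range (b.extendOfIsLattice K) = D.subtype '' Set.range b := by
    rw [← Set.range_comp]
    exact congrArg Set.range (funext (b.extendOfIsLattice_apply K))
  rw [hrange, ← Submodule.map_span, b.span_eq, Submodule.map_subtype_top]

theorem isLattice_dualSubmodule (hB : B.Nondegenerate) (hD : D.IsLattice K) :
    (B.dualSubmodule D).IsLattice K := by
  classical
  obtain ⟨b, hb⟩ := exists_basis_span_eq_of_isLattice hD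
  rw [← hb, LinearMap.BilinForm.dualSubmodule_span_of_basis B hB b]
  refine ⟨Submodule.fg_span (Set.finite_range _), ?_⟩
  rw [Submodule.span_span_of_tower, Module.Basis.span_eq]

theorem dualSubmodule_dualSubmodule (hB : B.Nondegenerate) (hrefl : IsReflOver R B)
    (hD : D.IsLattice K) : B.dualSubmodule (B.dualSubmodule D) = D := by
  obtain ⟨b, hb⟩ := exists_basis_span_eq_of_isLattice hD
  rw [← hrefl.dualSubmodule_flip D, ← hb,
    LinearMap.BilinForm.dualSubmodule_dualSubmodule_flip_of_basis B hB b]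

theorem colength_dualSubmodule (hB : B.Nondegenerate) (hrefl : IsReflOver R B)
    (hA : A.IsLattice K) (hC : C.IsLattice K) (hAC : A ≤ C) :
    colength (B.dualSubmodule C) (B.dualSubmodule A) = colength A C :=
  colength_of_antitone_involution (dualSubmodule_antitone B) hAC
    (fun _ hP => dualSubmodule_dualSubmodule hB hrefl (isLattice_of_le_of_le hA hC hP.1 hP.2))
    (fun _ hP => dualSubmodule_dualSubmodule hB hrefl
      (isLattice_of_le_of_le (isLattice_dualSubmodule hB hC) (isLattice_dualSubmodule hB hA)
        hP.1 hP.2))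

theorem colength_pointwise_smul_self {ϖ : R} (hϖ : Irreducible ϖ) (hD : D.IsLattice K) :
    colength (ϖ • D) D = Module.finrank K V := by
  have := PrincipalIdealRing.isMaximal_of_irreducible hϖ
  have : IsSimpleModule R (R ⧸ Ideal.span {ϖ}) := isSimpleModule_iff_isCoatom.2 this.out
  rw [colength_pointwise_smul_self_of_free, Module.length_eq_one, mul_one,
    Module.finrank, Submodule.IsLattice.rank' K D, Module.finrank]

end Duality

section SiegelFace

open LinearMap (BilinForm)

variable {R K V : Type*} [CommRing R] [Field K] [Algebra R K]
  [AddCommGroup V] [Module K V] [Module R V] [IsScalarTower R K V]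

/-- The defining conditions of `ℳ(𝔽)` for a bilinear form `B` over the fraction field `K` of `R`,
with `T D` in the role of `τD` and lengths `(2k, 2m, m)` in place of `(2, 2, 1)`:
`ϖD^∨ ⊂²ᵏ D ⊂²ᵐ D^∨`, `ϖD^∨ ⊂²ᵏ T D ⊂²ᵐ D^∨`, and `(D + T D)/D` has length at most `m`. -/
def IsSiegelLattice (B : BilinForm K V) (ϖ : R) (T : Submodule R V ≃o Submodule R V) (k m : ℕ)
    (D : Submodule R V) : Prop :=
  D.IsLattice K ∧
  HasColength (ϖ • B.dualSubmodule D) D (k + k) ∧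
  HasColength D (B.dualSubmodule D) (m + m) ∧
  HasColength (ϖ • B.dualSubmodule D) (T D) (k + k) ∧
  HasColength (T D) (B.dualSubmodule D) (m + m) ∧
  colength D (D ⊔ T D) ≤ m

variable {B : BilinForm K V} {ϖ : R} {L₀ L₂ D : Submodule R V} {d k m : ℕ}

theorem le_dualSubmodule_of_le (hself : B.dualSubmodule L₀ = L₀) (hDL₀ : D ≤ L₀) :
    L₀ ≤ B.dualSubmodule D :=
  hself.ge.trans (dualSubmodule_antitone B hDL₀)

theorem smul_dualSubmodule_le_of_le (hself : ϖ • B.dualSubmodule L₂ = L₂) (hL₂D : L₂ ≤ D) :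
    ϖ • B.dualSubmodule D ≤ L₂ :=
  (Submodule.map_mono (dualSubmodule_antitone B hL₂D)).trans hself.le

variable [IsDomain R] [IsPrincipalIdealRing R] [IsFractionRing R K]

theorem colength_dualSubmodule_of_le (hB : B.Nondegenerate) (hrefl : IsReflOver R B)
    (hD : D.IsLattice K) (hL₀ : L₀.IsLattice K) (hself : B.dualSubmodule L₀ = L₀)
    (hDL₀ : D ≤ L₀) : colength L₀ (B.dualSubmodule D) = colength D L₀ := by
  rw [← colength_dualSubmodule hB hrefl hD hL₀ hDL₀, hself]

theorem colength_smul_dualSubmodule_of_le (hB : B.Nondegenerate) (hrefl : IsReflOver R B)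
    (hϖ : ϖ ≠ 0) (hL₂ : L₂.IsLattice K) (hD : D.IsLattice K)
    (hself : ϖ • B.dualSubmodule L₂ = L₂) (hL₂D : L₂ ≤ D) :
    colength (ϖ • B.dualSubmodule D) L₂ = colength L₂ D := by
  have := Module.IsTorsionFree.trans_faithfulSMul R K V
  rw [← colength_dualSubmodule hB hrefl hL₂ hD hL₂D,
    ← colength_pointwise_smul (IsSMulRegular.of_ne_zero hϖ) (B.dualSubmodule D), hself]

theorem hasColength_of_finrank_eq (hB : B.Nondegenerate) (hrefl : IsReflOver R B)
    (hϖ : Irreducible ϖ) (hV : Module.finrank K V = d + d) (hL₀ : L₀.IsLattice K)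
    (hL₂ : L₂.IsLattice K) (hself₀ : B.dualSubmodule L₀ = L₀)
    (hself₂ : ϖ • B.dualSubmodule L₂ = L₂) (hL : L₂ ≤ L₀) :
    HasColength (ϖ • L₀) L₂ d ∧ HasColength L₂ L₀ d := by
  have hle : ϖ • L₀ ≤ L₂ := by
    simpa only [hself₀] using smul_dualSubmodule_le_of_le hself₂ hL
  have hsmul : HasColength (ϖ • L₀) L₀ (d + d) :=
    ⟨hle.trans hL, by rw [colength_pointwise_smul_self hϖ hL₀, hV]⟩
  refine hsmul.bisect hle hL ?_
  simpa only [hself₀] using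
    colength_smul_dualSubmodule_of_le hB hrefl hϖ.ne_zero hL₂ hL₀ hself₂ hL

theorem isSiegelLattice_of_hasColength (hB : B.Nondegenerate) (hrefl : IsReflOver R B)
    (hϖ : ϖ ≠ 0) (hL₀ : L₀.IsLattice K) (hL₂ : L₂.IsLattice K)
    (hself₀ : B.dualSubmodule L₀ = L₀) (hself₂ : ϖ • B.dualSubmodule L₂ = L₂)
    {T : Submodule R V ≃o Submodule R V} (hT₀ : T L₀ = L₀) (hT₂ : T L₂ = L₂)
    (hL₂D : HasColength L₂ D k) (hDL₀ : HasColength D L₀ m) : IsSiegelLattice B ϖ T k m D := by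
  have hD : D.IsLattice K := isLattice_of_le_of_le hL₂ hL₀ hL₂D.1 hDL₀.1
  have hdual : HasColength L₀ (B.dualSubmodule D) m :=
    ⟨le_dualSubmodule_of_le hself₀ hDL₀.1,
      (colength_dualSubmodule_of_le hB hrefl hD hL₀ hself₀ hDL₀.1).trans hDL₀.2⟩
  have hsmul : HasColength (ϖ • B.dualSubmodule D) L₂ k :=
    ⟨smul_dualSubmodule_le_of_le hself₂ hL₂D.1,
      (colength_smul_dualSubmodule_of_le hB hrefl hϖ hL₂ hD hself₂ hL₂D.1).trans hL₂D.2⟩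
  have hL₂T : HasColength L₂ (T D) k := hT₂ ▸ hL₂D.map_orderIso T
  have hTL₀ : HasColength (T D) L₀ m := hT₀ ▸ hDL₀.map_orderIso T
  exact ⟨hD, hsmul.trans hL₂D, hDL₀.trans hdual, hsmul.trans hL₂T, hTL₀.trans hdual,
    (colength_le_colength le_sup_left (sup_le hDL₀.1 hTL₀.1)).trans hDL₀.2.le⟩

theorem IsSiegelLattice.hasColength_right {T : Submodule R V ≃o Submodule R V}
    (hD : IsSiegelLattice B ϖ T k m D) (hB : B.Nondegenerate) (hrefl : IsReflOver R B)
    (hL₀ : L₀.IsLattice K) (hself : B.dualSubmodule L₀ = L₀) (hDL₀ : D ≤ L₀) :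
    HasColength D L₀ m := by
  obtain ⟨hDlat, -, hDdual, -⟩ := hD
  exact (hDdual.bisect hDL₀ (le_dualSubmodule_of_le hself hDL₀)
    (colength_dualSubmodule_of_le hB hrefl hDlat hL₀ hself hDL₀).symm).1

theorem stratum_siegel_face_general (hB : B.Nondegenerate) (hrefl : IsReflOver R B)
    (hϖ : Irreducible ϖ) (hV : Module.finrank K V = 2 * (k + m))
    {T : Submodule R V ≃o Submodule R V}
    (hL₀ : L₀.IsLattice K) (hT₀ : T L₀ = L₀) (hself₀ : L₀ = B.dualSubmodule L₀)
    (hL₂ : L₂.IsLattice K) (hT₂ : T L₂ = L₂) (hself₂ : L₂ = ϖ • B.dualSubmodule L₂)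
    (hL : L₂ ≤ L₀) :
    HasColength L₂ L₀ (k + m) ∧
    (∀ x ∈ L₀, ϖ • x ∈ L₂) ∧
    (∀ D, L₂ ≤ D → D ≤ L₀ → colength L₂ D = k → IsSiegelLattice B ϖ T k m D) ∧
    {D | IsSiegelLattice B ϖ T k m D ∧ L₂ ≤ D ∧ D ≤ L₀} =
      {D | L₂ ≤ D ∧ D ≤ L₀ ∧ colength L₂ D = k} := by
  obtain ⟨hϖL₀, hL₂L₀⟩ := hasColength_of_finrank_eq hB hrefl hϖ (hV.trans (two_mul _)) hL₀ hL₂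
    hself₀.symm hself₂.symm hL
  have hmem : ∀ D, L₂ ≤ D → D ≤ L₀ → colength L₂ D = k → IsSiegelLattice B ϖ T k m D :=
    fun D hL₂D hDL₀ hk =>
      isSiegelLattice_of_hasColength hB hrefl hϖ.ne_zero hL₀ hL₂ hself₀.symm hself₂.symm hT₀ hT₂
        ⟨hL₂D, hk⟩ (hL₂L₀.right_of_left ⟨hL₂D, hk⟩ hDL₀)
  refine ⟨hL₂L₀, fun x hx => hϖL₀.1 (Submodule.smul_mem_pointwise_smul x ϖ L₀ hx), hmem,
    Set.ext fun D => ⟨?_, fun ⟨hL₂D, hDL₀, hk⟩ => ⟨hmem D hL₂D hDL₀ hk, hL₂D, hDL₀⟩⟩⟩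
  rintro ⟨hD, hL₂D, hDL₀⟩
  have hDm : HasColength D L₀ m := hD.hasColength_right hB hrefl hL₀ hself₀.symm hDL₀
  exact ⟨hL₂D, hDL₀, (hL₂L₀.left_of_right hL₂D hDm).2⟩

end SiegelFace

section Witt

variable {p 𝔽}

section

omit [IsAlgClosed 𝔽] [CharP 𝔽 p]

variable {A B D : Submodule (Wp p 𝔽) (N0 p 𝔽)}

theorem relLength_eq_coe_colength (A B : Submodule (Wp p 𝔽) (N0 p 𝔽)) :
    relLength p 𝔽 A B = colength A B :=
  (Module.coe_length _ _).symm

theorem subD_iff {d : ℕ} : SubD p 𝔽 d A B ↔ HasColength A B d := by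
  rw [SubD, relLength_eq_coe_colength]
  exact and_congr_right fun _ => WithBot.coe_inj (b := (d : ℕ∞))

theorem isLattice_iff : IsLattice p 𝔽 D ↔ D.IsLattice (Kp p 𝔽) :=
  ⟨fun h => ⟨h.1, h.2⟩, fun h => ⟨h.fg, h.span_eq_top⟩⟩

variable (p 𝔽) in
/-- The symplectic form `omegaForm` as a bilinear form, to which the duality of lattices applies. -/
def omegaBilin : LinearMap.BilinForm (Kp p 𝔽) (N0 p 𝔽) :=
  LinearMap.mk₂ (Kp p 𝔽) (omegaForm p 𝔽)
    (fun x y z => by simp only [omegaForm, Pi.add_apply]; ring)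
    (fun c x y => by simp only [omegaForm, Pi.smul_apply, smul_eq_mul]; ring)
    (fun x y z => by simp only [omegaForm, Pi.add_apply]; ring)
    (fun c x y => by simp only [omegaForm, Pi.smul_apply, smul_eq_mul]; ring)

theorem isAlt_omegaBilin : (omegaBilin p 𝔽).IsAlt := by
  intro x
  change x 0 * x 3 - x 3 * x 0 + x 1 * x 2 - x 2 * x 1 = 0
  ring

theorem nondegenerate_omegaBilin : (omegaBilin p 𝔽).Nondegenerate := by
  refine isAlt_omegaBilin.isRefl.nondegenerate_iff_separatingLeft.2 fun x hx => ?_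
  have hx' (i : Fin 4) : omegaForm p 𝔽 x (Pi.single i 1) = 0 := hx (Pi.single i 1)
  have h₀ : x 3 = 0 := by simpa [omegaForm] using hx' 0
  have h₁ : x 2 = 0 := by simpa [omegaForm] using hx' 1
  have h₂ : x 1 = 0 := by simpa [omegaForm] using hx' 2
  have h₃ : x 0 = 0 := by simpa [omegaForm] using hx' 3
  funext i
  fin_cases i <;> assumption

end

omit [IsAlgClosed 𝔽] in
theorem dualL_eq_dualSubmodule (D : Submodule (Wp p 𝔽) (N0 p 𝔽)) :
    dualL p 𝔽 D = (omegaBilin p 𝔽).dualSubmodule D :=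
  Submodule.ext fun _ => forall₂_congr fun _ _ => Submodule.mem_one.symm

variable {σ : Kp p 𝔽 ≃+* Kp p 𝔽}

/-- The action `D ↦ τD` on `W`-submodules. It is an order isomorphism because `τ` is a bijection
which is semilinear for the Frobenius automorphism of `W`. -/
def tauOrderIso (hσ : IsWittFrobenius p 𝔽 σ) :
    Submodule (Wp p 𝔽) (N0 p 𝔽) ≃o Submodule (Wp p 𝔽) (N0 p 𝔽) :=
  let φ := WittVector.frobeniusEquiv p 𝔽
  have : RingHomInvPair (φ : Wp p 𝔽 →+* Wp p 𝔽) φ.symm := RingHomInvPair.of_ringEquiv φ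
  have : RingHomInvPair (φ.symm : Wp p 𝔽 →+* Wp p 𝔽) φ := RingHomInvPair.symm _ _
  let τ : N0 p 𝔽 ≃ₛₗ[(φ : Wp p 𝔽 →+* Wp p 𝔽)] N0 p 𝔽 :=
    { Equiv.piCongrRight fun _ : Fin 4 => σ.toEquiv with
      map_add' := fun x y => funext fun i => map_add σ (x i) (y i)
      map_smul' := fun c x => funext fun i => by
        change σ (c • x i) = φ c • σ (x i)
        rw [Algebra.smul_def, map_mul, hσ c, ← Algebra.smul_def] }
  Submodule.orderIsoMapComap τ

theorem tauOrderIso_apply (hσ : IsWittFrobenius p 𝔽 σ) (D : Submodule (Wp p 𝔽) (N0 p 𝔽)) :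
    tauOrderIso hσ D = tauL p 𝔽 σ D :=
  (Submodule.span_eq (tauOrderIso hσ D)).symm

theorem memM_iff (hσ : IsWittFrobenius p 𝔽 σ) (D : Submodule (Wp p 𝔽) (N0 p 𝔽)) :
    memM p 𝔽 σ D ↔ IsSiegelLattice (omegaBilin p 𝔽) (p : Wp p 𝔽) (tauOrderIso hσ) 1 1 D := by
  simp only [memM, IsSiegelLattice, isLattice_iff, subD_iff, tauOrderIso_apply,
    dualL_eq_dualSubmodule, relLength_eq_coe_colength, WithBot.coe_le_one, Nat.cast_one,
    Nat.reduceAdd]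

end Witt

/-- Let `L₀` be a `τ`-stable lattice with `L₀ = L₀^∨`, `L₂` a
`τ`-stable lattice with `L₂ = pL₂^∨` and `L₂ ⊆ L₀`. Then `L₂ ⊂² L₀`, the quotient
`L₀/L₂` is a 2-dimensional `𝔽`-vector space (it has `W`-length 2 and is killed by
`p`), every `W`-submodule `D` with `L₂ ⊆ D ⊆ L₀` and `length_W(D/L₂) = 1` lies in
`ℳ(𝔽)`, and `D ↦ D/L₂` is a bijection from `{D ∈ ℳ(𝔽) : L₂ ⊆ D ⊆ L₀}` onto the set
of lines in `L₀/L₂` (encoded as the set of intermediate submodules of relative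
length `1`, so that bijectivity becomes an equality of sets of submodules). -/
theorem stratum_siegel_face
    (p : ℕ) [Fact p.Prime] (hp : Odd p)
    (𝔽 : Type) [Field 𝔽] [IsAlgClosed 𝔽] [CharP 𝔽 p]
    (σ : Kp p 𝔽 ≃+* Kp p 𝔽) (hσ : IsWittFrobenius p 𝔽 σ)
    (L₀ L₂ : Submodule (Wp p 𝔽) (N0 p 𝔽))
    (hL0 : IsLattice p 𝔽 L₀) (hτ0 : tauL p 𝔽 σ L₀ = L₀) (h0 : L₀ = dualL p 𝔽 L₀)
    (hL2 : IsLattice p 𝔽 L₂) (hτ2 : tauL p 𝔽 σ L₂ = L₂)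
    (h2 : L₂ = (p : Wp p 𝔽) • dualL p 𝔽 L₂) (h20 : L₂ ≤ L₀) :
    SubD p 𝔽 2 L₂ L₀ ∧
    (∀ x ∈ L₀, (p : Wp p 𝔽) • x ∈ L₂) ∧
    (∀ D : Submodule (Wp p 𝔽) (N0 p 𝔽),
      L₂ ≤ D → D ≤ L₀ → relLength p 𝔽 L₂ D = (1 : WithBot ℕ∞) → memM p 𝔽 σ D) ∧
    {D : Submodule (Wp p 𝔽) (N0 p 𝔽) | memM p 𝔽 σ D ∧ L₂ ≤ D ∧ D ≤ L₀} =
      {D : Submodule (Wp p 𝔽) (N0 p 𝔽) |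
        L₂ ≤ D ∧ D ≤ L₀ ∧ relLength p 𝔽 L₂ D = (1 : WithBot ℕ∞)} := by
  have hV : Module.finrank (Kp p 𝔽) (N0 p 𝔽) = 2 * (1 + 1) := Module.finrank_fin_fun _
  simpa only [memM_iff hσ, subD_iff, relLength_eq_coe_colength, WithBot.coe_eq_one, Nat.cast_one]
    using stratum_siegel_face_general nondegenerate_omegaBilin
      (isReflOver_of_isAlt isAlt_omegaBilin) (WittVector.irreducible p) hV (isLattice_iff.1 hL0)
      ((tauOrderIso_apply hσ L₀).trans hτ0) (h0.trans (dualL_eq_dualSubmodule L₀))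
      (isLattice_iff.1 hL2) ((tauOrderIso_apply hσ L₂).trans hτ2)
      (dualL_eq_dualSubmodule L₂ ▸ h2) h20

end
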